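/- arXiv:2304.14895 — 2 statements merged into one kernel-verified Lean document; each statement's English description precedes it below -/
import Mathlib

section
/- If ζ and ε are independent real random variables, ζ is Gaussian with mean 0 and variance 1, ε has mean 0 and nonzero variance, and E(ζ | ζ + ε) = c(ζ + ε) almost surely for some constant c ∉ {0,1}, then the characteristic function of ε satisfies φ'(t) + (c⁻¹ - 1) t φ(t) = 0 for all t, and hence ε is Gaussian. -/
open MeasureTheory ProbabilityTheory Complex

/-!
Let `ψ` and `φ` be the characteristic functions of `ζ` and `ε`. Integrating the regression identity
`E(ζ | ζ + ε) = c (ζ + ε)` against `exp (i t (ζ + ε))` and using independence gives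
`ψ' φ = c (ψ φ)'`. For `ζ ~ N(m, v)` we have `ψ' = (i m - v t) ψ` and `ψ` has no zeros, so `ψ`
cancels and `φ' = (c⁻¹ - 1) (i m - v t) φ`. The solution with `φ 0 = 1` is the Gaussian
characteristic function of mean `(c⁻¹ - 1) m` and variance `(c⁻¹ - 1) v`; the latter is nonnegative
because `|φ| ≤ 1`.
-/

lemma eq_mul_exp_sub_of_hasDerivAt {f g g' : ℝ → ℂ} (hg : ∀ t, HasDerivAt g (g' t) t)
    (hf : ∀ t, HasDerivAt f (g' t * f t) t) (s t : ℝ) : f t = f s * exp (g t - g s) := by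
  have hconst (x : ℝ) : HasDerivAt (fun y ↦ f y * exp (-g y)) 0 x := by
    refine ((hf x).mul (hg x).fun_neg.cexp).congr_deriv ?_
    ring
  have hts : f t * exp (-g t) = f s * exp (-g s) :=
    is_const_of_deriv_eq_zero (fun x ↦ (hconst x).differentiableAt) (fun x ↦ (hconst x).deriv) t s
  calc f t = f t * exp (-g t) * exp (g t) := by rw [mul_assoc, ← exp_add]; simp
    _ = f s * exp (g t - g s) := by rw [hts, mul_assoc, ← exp_add]; ring_nf

section GaussianCharFun

lemma hasDerivAt_gaussian_exponent (m v t : ℝ) :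
    HasDerivAt (fun s : ℝ ↦ (s * m * I - v * s ^ 2 / 2 : ℂ)) (m * I - v * t) t := by
  have hid : HasDerivAt (fun s : ℝ ↦ (s : ℂ)) 1 t := ofRealCLM.hasDerivAt
  refine (((hid.mul_const (m : ℂ)).mul_const I).sub
    (((hid.fun_pow 2).const_mul (v : ℂ)).div_const 2)).congr_deriv ?_
  push_cast
  ring

lemma hasDerivAt_charFun_gaussianReal (m : ℝ) (v : NNReal) (t : ℝ) :
    HasDerivAt (charFun (gaussianReal m v)) ((m * I - v * t) * charFun (gaussianReal m v) t) t := by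
  simp only [funext charFun_gaussianReal, mul_comm (_ - _)]
  exact (hasDerivAt_gaussian_exponent m v t).cexp

variable {ν : Measure ℝ} [IsProbabilityMeasure ν] {m v : ℝ}

lemma nonneg_of_charFun_eq_exp (h : ∀ t : ℝ, charFun ν t = exp (t * m * I - v * t ^ 2 / 2)) :
    0 ≤ v := by
  have hnorm : Real.exp (-(v / 2)) ≤ 1 := by
    simpa [h, norm_exp, ← ofReal_div] using norm_charFun_le_one (μ := ν) (1 : ℝ)
  linarith [Real.exp_le_one_iff.mp hnorm]

lemma exists_eq_gaussianReal_of_hasDerivAt_charFun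
    (h : ∀ t : ℝ, HasDerivAt (charFun ν) ((m * I - v * t) * charFun ν t) t) :
    ∃ w : NNReal, (w : ℝ) = v ∧ ν = gaussianReal m w := by
  have hsol (t : ℝ) : charFun ν t = exp (t * m * I - v * t ^ 2 / 2) := by
    simpa using eq_mul_exp_sub_of_hasDerivAt (hasDerivAt_gaussian_exponent m v) h 0 t
  lift v to NNReal using nonneg_of_charFun_eq_exp hsol
  refine ⟨v, rfl, Measure.ext_of_charFun ?_⟩
  ext t
  rw [hsol, charFun_gaussianReal]

end GaussianCharFun

section CharFunMap

variable {Ω : Type*} {mΩ : MeasurableSpace Ω} {μ : Measure Ω} {X Y : Ω → ℝ}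

lemma charFun_map_eq_integral (hX : AEMeasurable X μ) (t : ℝ) :
    charFun (μ.map X) t = ∫ ω, exp (t * X ω * I) ∂μ := by
  rw [charFun_apply_real, integral_map hX (by fun_prop)]

variable [IsFiniteMeasure μ]

lemma hasDerivAt_charFun_map (hX : Integrable X μ) (t : ℝ) :
    HasDerivAt (charFun (μ.map X)) (I * ∫ ω, X ω * exp (t * X ω * I) ∂μ) t := by
  have hXm : AEMeasurable X μ := hX.aemeasurable
  have hid : MemLp id (1 : ℕ) (μ.map X) := by
    rw [Nat.cast_one, memLp_one_iff_integrable]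
    exact (integrable_map_measure (by fun_prop) hXm).2 hX
  have hderiv : deriv (charFun (μ.map X)) t = I * ∫ ω, X ω * exp (t * X ω * I) ∂μ := by
    rw [← iteratedDeriv_one, iteratedDeriv_charFun hid, integral_map hXm (by fun_prop)]
    simp only [pow_one]
  rw [← hderiv]
  exact ((contDiff_charFun hid).differentiable (by simp) t).hasDerivAt

lemma deriv_charFun_map_mul_charFun_map (hXY : IndepFun X Y μ) (hX : Integrable X μ)
    (hY : AEMeasurable Y μ) (t : ℝ) :
    deriv (charFun (μ.map X)) t * charFun (μ.map Y) t
      = I * ∫ ω, X ω * exp (t * (X ω + Y ω : ℝ) * I) ∂μ := by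
  rw [(hasDerivAt_charFun_map hX t).deriv, charFun_map_eq_integral hY, mul_assoc,
    ← hXY.integral_fun_comp_mul_comp (f := fun x : ℝ ↦ x * exp (t * x * I))
      (g := fun y : ℝ ↦ exp (t * y * I)) hX.aemeasurable hY (by fun_prop) (by fun_prop)]
  congr 2 with ω
  rw [mul_assoc, ← exp_add]
  push_cast
  ring_nf

end CharFunMap

section LinearRegression

variable {Ω : Type*} {m mΩ : MeasurableSpace Ω} {μ : Measure Ω} {X Y : Ω → ℝ} {c : ℝ}

lemma integral_condExp_smul_of_stronglyMeasurable {E : Type*} [NormedAddCommGroup E]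
    [NormedSpace ℝ E] [CompleteSpace E] {g : Ω → E} (hm : m ≤ mΩ) [SigmaFinite (μ.trim hm)]
    (hX : Integrable X μ) (hg : StronglyMeasurable[m] g)
    (hXg : Integrable (fun ω ↦ X ω • g ω) μ) :
    ∫ ω, (μ[X | m]) ω • g ω ∂μ = ∫ ω, X ω • g ω ∂μ := by
  rw [← integral_condExp hm (f := fun ω ↦ X ω • g ω)]
  exact (integral_congr_ae
    (condExp_bilin_of_stronglyMeasurable_right (.lsmul ℝ ℝ) hg hXg hX)).symm

lemma integrable_right_of_condExp_eq_const_mul_add (hX : Integrable X μ) (hc : c ≠ 0)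
    (hlin : μ[X | m] =ᵐ[μ] fun ω ↦ c * (X ω + Y ω)) : Integrable Y μ := by
  have hadd : Integrable (fun ω ↦ X ω + Y ω) μ :=
    (integrable_const_mul_iff hc.isUnit _).1 (integrable_condExp.congr hlin)
  exact (hadd.sub hX).congr (ae_of_all _ fun ω ↦ add_sub_cancel_left (X ω) (Y ω))

variable [IsFiniteMeasure μ]

lemma integral_mul_exp_of_condExp_eq_const_mul (hX : Integrable X μ) (hY : Measurable Y)
    (hlin : μ[X | MeasurableSpace.comap Y inferInstance] =ᵐ[μ] fun ω ↦ c * Y ω) (t : ℝ) :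
    ∫ ω, X ω * exp (t * Y ω * I) ∂μ = c * ∫ ω, Y ω * exp (t * Y ω * I) ∂μ := by
  have hexp : StronglyMeasurable[MeasurableSpace.comap Y inferInstance]
      fun ω ↦ exp (t * Y ω * I) := by
    have hmeas : Measurable fun y : ℝ ↦ exp (t * y * I) := by fun_prop
    exact (hmeas.comp (comap_measurable Y)).stronglyMeasurable
  have hint : Integrable (fun ω ↦ X ω • exp (t * Y ω * I)) μ := by
    refine hX.smul_bdd 1 (by fun_prop) (ae_of_all _ fun ω ↦ ?_)
    rw [← ofReal_mul, norm_exp_ofReal_mul_I]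
  calc ∫ ω, X ω * exp (t * Y ω * I) ∂μ
      = ∫ ω, (μ[X | MeasurableSpace.comap Y inferInstance]) ω • exp (t * Y ω * I) ∂μ :=
        (integral_condExp_smul_of_stronglyMeasurable hY.comap_le hX hexp hint).symm
    _ = ∫ ω, c * (Y ω * exp (t * Y ω * I)) ∂μ := by
        refine integral_congr_ae ?_
        filter_upwards [hlin] with ω hω
        rw [hω, real_smul, ofReal_mul, mul_assoc]
    _ = c * ∫ ω, Y ω * exp (t * Y ω * I) ∂μ := integral_const_mul _ _

lemma deriv_charFun_mul_of_condExp_eq_const_mul_add (hXY : IndepFun X Y μ)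
    (hX : Integrable X μ) (hY : Integrable Y μ) (hadd : Measurable fun ω ↦ X ω + Y ω)
    (hlin : μ[X | MeasurableSpace.comap (fun ω ↦ X ω + Y ω) inferInstance]
      =ᵐ[μ] fun ω ↦ c * (X ω + Y ω)) (t : ℝ) :
    deriv (charFun (μ.map X)) t * charFun (μ.map Y) t
      = c * deriv (charFun (μ.map X) * charFun (μ.map Y)) t := by
  rw [deriv_charFun_map_mul_charFun_map hXY hX hY.aemeasurable,
    integral_mul_exp_of_condExp_eq_const_mul hX hadd hlin,
    ← hXY.charFun_map_fun_add_eq_mul hX.aemeasurable hY.aemeasurable,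
    (hasDerivAt_charFun_map (hX.fun_add hY) t).deriv, mul_left_comm]

end LinearRegression

section GaussianRegression

variable {Ω : Type*} {mΩ : MeasurableSpace Ω} {μ : Measure Ω} {ζ ε : Ω → ℝ} {m c : ℝ} {v : NNReal}

lemma integrable_of_map_eq_gaussianReal (hζ : μ.map ζ = gaussianReal m v) :
    Integrable ζ μ := by
  have hmζ : AEMeasurable ζ μ :=
    AEMeasurable.of_map_ne_zero (hζ ▸ IsProbabilityMeasure.ne_zero (gaussianReal m v))
  have hid : Integrable id (μ.map ζ) := by
    rw [hζ, ← memLp_one_iff_integrable]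
    exact memLp_id_gaussianReal 1
  exact (integrable_map_measure (by fun_prop) hmζ).1 hid

lemma hasDerivAt_charFun_of_condExp_gaussian_eq_const_mul_add [IsFiniteMeasure μ]
    (hadd : Measurable fun ω ↦ ζ ω + ε ω) (hindep : IndepFun ζ ε μ)
    (hζ : μ.map ζ = gaussianReal m v) (hc : c ≠ 0)
    (hlin : μ[ζ | MeasurableSpace.comap (fun ω ↦ ζ ω + ε ω) inferInstance]
      =ᵐ[μ] fun ω ↦ c * (ζ ω + ε ω)) (t : ℝ) :
    HasDerivAt (charFun (μ.map ε))
      (((c⁻¹ - 1 : ℝ) : ℂ) * (m * I - v * t) * charFun (μ.map ε) t) t := by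
  have hiζ : Integrable ζ μ := integrable_of_map_eq_gaussianReal hζ
  have hiε : Integrable ε μ := integrable_right_of_condExp_eq_const_mul_add hiζ hc hlin
  set ψ := charFun (μ.map ζ) with hψ
  set φ := charFun (μ.map ε)
  have hψ' : HasDerivAt ψ ((m * I - v * t) * ψ t) t := by
    rw [hψ, hζ]
    exact hasDerivAt_charFun_gaussianReal m v t
  have hφ' : HasDerivAt φ (deriv φ t) t :=
    (hasDerivAt_charFun_map hiε t).differentiableAt.hasDerivAt
  have hψ0 : ψ t ≠ 0 := by
    rw [hψ, hζ, charFun_gaussianReal]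
    exact exp_ne_zero _
  have hreg : (m * I - v * t) * ψ t * φ t
      = c * ((m * I - v * t) * ψ t * φ t + ψ t * deriv φ t) := by
    rw [← (hψ'.mul hφ').deriv, ← deriv_charFun_mul_of_condExp_eq_const_mul_add hindep hiζ
      hiε hadd hlin, hψ'.deriv]
  refine hφ'.congr_deriv (mul_left_cancel₀ (mul_ne_zero (ofReal_ne_zero.2 hc) hψ0) ?_)
  have hcc : (c : ℂ) * (c : ℂ)⁻¹ = 1 := mul_inv_cancel₀ (ofReal_ne_zero.2 hc)
  push_cast
  linear_combination -hreg - (m * I - v * t) * ψ t * φ t * hcc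

end GaussianRegression

theorem stmt0_general {Ω : Type*} [MeasurableSpace Ω] (μ : Measure Ω) [IsProbabilityMeasure μ]
    (ζ ε : Ω → ℝ) (hadd : Measurable fun ω ↦ ζ ω + ε ω) (hindep : IndepFun ζ ε μ)
    (m : ℝ) (v : NNReal) (hζ : Measure.map ζ μ = gaussianReal m v)
    (c : ℝ) (hc0 : c ≠ 0)
    (hlin : μ[ζ | MeasurableSpace.comap (fun ω ↦ ζ ω + ε ω) inferInstance]
      =ᵐ[μ] fun ω ↦ c * (ζ ω + ε ω))
    (φ : ℝ → ℂ) (hφ : φ = fun t : ℝ ↦ ∫ ω, Complex.exp (Complex.I * (t : ℂ) * (ε ω : ℂ)) ∂μ) :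
    (∀ t : ℝ, HasDerivAt φ (((c⁻¹ - 1 : ℝ) : ℂ) * (m * I - v * t) * φ t) t) ∧
      ∃ w : NNReal, (w : ℝ) = (c⁻¹ - 1) * v ∧
        Measure.map ε μ = gaussianReal ((c⁻¹ - 1) * m) w := by
  have hmε : AEMeasurable ε μ := (integrable_right_of_condExp_eq_const_mul_add
    (integrable_of_map_eq_gaussianReal hζ) hc0 hlin).aemeasurable
  have hφ_charFun : φ = charFun (μ.map ε) := by
    ext t
    simp only [hφ, charFun_map_eq_integral hmε, mul_comm, mul_left_comm]
  have hderiv (t : ℝ) := hasDerivAt_charFun_of_condExp_gaussian_eq_const_mul_add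
    hadd hindep hζ hc0 hlin t
  have : IsProbabilityMeasure (μ.map ε) := Measure.isProbabilityMeasure_map hmε
  refine ⟨fun t ↦ ?_, exists_eq_gaussianReal_of_hasDerivAt_charFun fun t ↦ ?_⟩
  · simpa [hφ_charFun] using hderiv t
  · refine (hderiv t).congr_deriv ?_
    push_cast
    ring

/-- If ζ and ε are independent, ζ ~ N(0,1), E ε = 0, Var ε ≠ 0, and
E(ζ | ζ+ε) = c(ζ+ε) a.s. for a constant c ∉ {0,1}, then the characteristic function
φ of ε satisfies φ'(t) + (c⁻¹ - 1) t φ(t) = 0 for all t, and ε is Gaussian. -/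
theorem stmt0 {Ω : Type*} [MeasurableSpace Ω] (μ : Measure Ω) [IsProbabilityMeasure μ]
    (ζ ε : Ω → ℝ) (hmζ : Measurable ζ) (hmε : Measurable ε)
    (hindep : IndepFun ζ ε μ)
    (hζ : Measure.map ζ μ = gaussianReal 0 1)
    (hε0 : ∫ ω, ε ω ∂μ = 0) (hεvar : variance ε μ ≠ 0)
    (c : ℝ) (hc0 : c ≠ 0) (hc1 : c ≠ 1)
    (hlin : μ[ζ | MeasurableSpace.comap (fun ω => ζ ω + ε ω) inferInstance]
      =ᵐ[μ] fun ω => c * (ζ ω + ε ω))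
    (φ : ℝ → ℂ) (hφ : φ = fun t : ℝ => ∫ ω, Complex.exp (Complex.I * (t : ℂ) * (ε ω : ℂ)) ∂μ) :
    (∀ t : ℝ, deriv φ t + ((c⁻¹ - 1 : ℝ) : ℂ) * t * φ t = 0) ∧
      ∃ (m : ℝ) (v : NNReal), Measure.map ε μ = gaussianReal m v := by
  obtain ⟨hderiv, w, -, hw⟩ := stmt0_general μ ζ ε (hmζ.fun_add hmε) hindep 0 1 hζ c hc0
    hlin φ hφ
  exact ⟨fun t ↦ by simp [(hderiv t).deriv], _, w, hw⟩
end

section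
/- Under the linear structural model A = γZ + λᵀU + ε_A and Y = αA + βZ + sᵀU + ε_Y, with (Z,U) centered Gaussian (Var(Z)=1, Var(U)=Iₜ, Cov(Z,U)=ξᵀ), ε_A ⊥ (Z,U) non-Gaussian with nonzero variance, E(ε_Y | A)=0, and Cov(Z,A) = γ + ξᵀλ ≠ 0, the conditional expectation satisfies E(Y | A) = αA + h·E(Z | A) almost surely, where h = β + sᵀ(γξ + λ)/(γ + ξᵀλ). -/
open MeasureTheory ProbabilityTheory

/-!
Write `A = X + ε` with `X = γZ + λᵀU`. The combination `D = Cov(Z, X) sᵀU - Cov(sᵀU, X) Z` is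
uncorrelated with `X`, hence independent of `X` by joint Gaussianity, hence independent of `A`
because `ε` is independent of `(D, X)`. So `E(D | A) = E(D) = 0`, which makes `E(sᵀU | A)` a
multiple of `E(Z | A)`.
-/

section Independence

variable {Ω β₁ β₂ β₃ : Type*} [MeasurableSpace Ω] [MeasurableSpace β₁] [MeasurableSpace β₂]
  [MeasurableSpace β₃] {μ : Measure Ω} [IsFiniteMeasure μ]

lemma indepFun_prodMk_right_of_prodMk_left {X : Ω → β₁} {Y : Ω → β₂} {Z : Ω → β₃}
    (hX : Measurable X) (hY : Measurable Y) (hZ : Measurable Z) (hXY : IndepFun X Y μ)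
    (hXYZ : IndepFun (fun ω => (X ω, Y ω)) Z μ) :
    IndepFun X (fun ω => (Y ω, Z ω)) μ := by
  have hYZ : IndepFun Y Z μ := hXYZ.comp measurable_snd measurable_id
  rw [indepFun_iff_map_prod_eq_prod_map_map (by fun_prop) (by fun_prop)] at hXY hXYZ hYZ ⊢
  rw [hYZ, ← Measure.prodAssoc_prod, ← hXY, ← hXYZ,
    Measure.map_map (MeasurableEquiv.measurable _) (by fun_prop)]
  rfl

lemma condExp_comap_eq_integral_of_indepFun {E : Type*} [NormedAddCommGroup E] [NormedSpace ℝ E]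
    [CompleteSpace E] [SecondCountableTopology E] [MeasurableSpace E] [BorelSpace E]
    {X : Ω → E} {Y : Ω → β₁} (hX : Measurable X) (hY : Measurable Y) (hXY : IndepFun X Y μ) :
    μ[X | MeasurableSpace.comap Y inferInstance] =ᵐ[μ] fun _ => μ[X] :=
  condExp_indep_eq hX.comap_le hY.comap_le (comap_measurable X).stronglyMeasurable hXY

end Independence

section CondExp

variable {Ω : Type*} {m m₀ : MeasurableSpace Ω} {μ : Measure Ω}

lemma condExp_smul_sub_smul {X Y : Ω → ℝ} (hX : Integrable X μ) (hY : Integrable Y μ) (a b : ℝ) :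
    μ[a • X - b • Y | m] =ᵐ[μ] fun ω => a * (μ[X | m]) ω - b * (μ[Y | m]) ω := by
  filter_upwards [condExp_sub (hX.smul a) (hY.smul b) m, condExp_smul a X m, condExp_smul b Y m]
    with ω hsub hsmulX hsmulY
  simp only [hsub, hsmulX, hsmulY, Pi.sub_apply, Pi.smul_apply, smul_eq_mul]

lemma condExp_smul_add_smul_add_of_condExp_eq_zero (hm : m ≤ m₀) [SigmaFinite (μ.trim hm)]
    {A Z W ε : Ω → ℝ} (hmA : StronglyMeasurable[m] A) (hA : Integrable A μ)
    (hZ : Integrable Z μ) (hW : Integrable W μ) (hε : Integrable ε μ)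
    (hεm : μ[ε | m] =ᵐ[μ] 0) (α β : ℝ) :
    μ[α • A + β • Z + W + ε | m] =ᵐ[μ]
      fun ω => α * A ω + β * (μ[Z | m]) ω + (μ[W | m]) ω := by
  have hαA : μ[α • A | m] = α • A :=
    condExp_of_stronglyMeasurable hm (hmA.const_smul α) (hA.smul α)
  have hAZ : Integrable (α • A + β • Z) μ := (hA.smul α).add (hZ.smul β)
  filter_upwards [condExp_add (hAZ.add hW) hε m, condExp_add hAZ hW m,
    condExp_add (hA.smul α) (hZ.smul β) m, condExp_smul β Z m, hεm]
    with ω hadd₁ hadd₂ hadd₃ hsmul hzero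
  simp only [hadd₁, hadd₂, hadd₃, hsmul, hzero, hαA, Pi.add_apply, Pi.smul_apply, smul_eq_mul,
    Pi.zero_apply, add_zero]

end CondExp

section GaussianSignal

variable {Ω E : Type*} [MeasurableSpace Ω] [NormedAddCommGroup E] [NormedSpace ℝ E]
  [MeasurableSpace E] [BorelSpace E] {μ : Measure Ω} {V : Ω → E} {ε : Ω → ℝ}

lemma indepFun_add_noise_of_covariance_eq_zero (hV : HasGaussianLaw V μ) (hmV : Measurable V)
    (hmε : Measurable ε) (hVε : IndepFun V ε μ) {D K : StrongDual ℝ E}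
    (hDK : cov[fun ω => D (V ω), fun ω => K (V ω); μ] = 0) :
    IndepFun (fun ω => D (V ω)) (fun ω => K (V ω) + ε ω) μ := by
  have : IsProbabilityMeasure μ := hV.isProbabilityMeasure
  have hpair : IndepFun (fun ω => D (V ω)) (fun ω => K (V ω)) μ :=
    (hV.map_fun (D.prod K)).indepFun_of_covariance_eq_zero hDK
  have hnoise : IndepFun (fun ω => (D (V ω), K (V ω))) ε μ :=
    hVε.comp (φ := fun x => (D x, K x)) (by fun_prop) measurable_id
  exact (indepFun_prodMk_right_of_prodMk_left (by fun_prop) (by fun_prop) hmε hpair hnoise).comp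
    measurable_id measurable_add

lemma condExp_add_noise_eq_integral_of_covariance_eq_zero (hV : HasGaussianLaw V μ)
    (hmV : Measurable V) (hmε : Measurable ε) (hVε : IndepFun V ε μ) {D K : StrongDual ℝ E}
    (hDK : cov[fun ω => D (V ω), fun ω => K (V ω); μ] = 0) :
    μ[fun ω => D (V ω) | MeasurableSpace.comap (fun ω => K (V ω) + ε ω) inferInstance]
      =ᵐ[μ] fun _ => ∫ ω, D (V ω) ∂μ := by
  have : IsProbabilityMeasure μ := hV.isProbabilityMeasure
  exact condExp_comap_eq_integral_of_indepFun (by fun_prop) (by fun_prop)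
    (indepFun_add_noise_of_covariance_eq_zero hV hmV hmε hVε hDK)

lemma covariance_mul_condExp_add_noise_sub_integral (hV : HasGaussianLaw V μ)
    (hmV : Measurable V) (hmε : Measurable ε) (hVε : IndepFun V ε μ) (L M K : StrongDual ℝ E) :
    ∀ᵐ ω ∂μ, cov[fun ω => L (V ω), fun ω => K (V ω); μ] *
        ((μ[fun ω => M (V ω) |
          MeasurableSpace.comap (fun ω => K (V ω) + ε ω) inferInstance]) ω - ∫ ω, M (V ω) ∂μ) =
      cov[fun ω => M (V ω), fun ω => K (V ω); μ] *
        ((μ[fun ω => L (V ω) |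
          MeasurableSpace.comap (fun ω => K (V ω) + ε ω) inferInstance]) ω - ∫ ω, L (V ω) ∂μ) := by
  have : IsProbabilityMeasure μ := hV.isProbabilityMeasure
  set c := cov[fun ω => L (V ω), fun ω => K (V ω); μ] with hc
  set d := cov[fun ω => M (V ω), fun ω => K (V ω); μ] with hd
  have hL : HasGaussianLaw (fun ω => L (V ω)) μ := hV.map_fun L
  have hM : HasGaussianLaw (fun ω => M (V ω)) μ := hV.map_fun M
  have hK : HasGaussianLaw (fun ω => K (V ω)) μ := hV.map_fun K
  have hD : (fun ω => (c • M - d • L) (V ω)) =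
      c • (fun ω => M (V ω)) - d • (fun ω => L (V ω)) := rfl
  have hDK : cov[fun ω => (c • M - d • L) (V ω), fun ω => K (V ω); μ] = 0 := by
    rw [hD, covariance_sub_left (hM.memLp_two.const_smul c) (hL.memLp_two.const_smul d)
      hK.memLp_two, covariance_smul_left, covariance_smul_left, ← hc, ← hd]
    ring
  have hmean : ∫ ω, (c • M - d • L) (V ω) ∂μ = c * ∫ ω, M (V ω) ∂μ - d * ∫ ω, L (V ω) ∂μ := by
    rw [hD, integral_sub' (hM.integrable.smul c) (hL.integrable.smul d)]
    simp only [Pi.smul_apply, smul_eq_mul, integral_const_mul]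
  have hcond := condExp_add_noise_eq_integral_of_covariance_eq_zero hV hmV hmε hVε hDK
  rw [hmean, hD] at hcond
  filter_upwards [(condExp_smul_sub_smul hM.integrable hL.integrable c d).symm.trans hcond]
    with ω hω
  linarith

end GaussianSignal

section Moments

variable {Ω : Type*} [MeasurableSpace Ω] {μ : Measure Ω} {X Y : Ω → ℝ}

lemma integral_eq_of_map_eq_gaussianReal {m : ℝ} {v : NNReal} (hX : μ.map X = gaussianReal m v) :
    μ[X] = m := by
  have hmX : AEMeasurable X μ := AEMeasurable.of_map_ne_zero (by simp [hX, NeZero.ne])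
  simpa using (HasLaw.mk hmX hX).integral_eq

lemma covariance_eq_integral_mul [IsProbabilityMeasure μ] (hX : MemLp X 2 μ) (hY : MemLp Y 2 μ)
    (hmean : μ[X] = 0) : cov[X, Y; μ] = ∫ ω, X ω * Y ω ∂μ := by
  simp [covariance_eq_sub hX hY, hmean]

end Moments

section LinearForm

variable {ι : Type*} [Fintype ι]

/-- The linear form `(z, u) ↦ a z + bᵀu` on `ℝ × ℝ^ι`. -/
noncomputable def linearForm (a : ℝ) (b : ι → ℝ) : StrongDual ℝ (ℝ × (ι → ℝ)) :=
  (a • ContinuousLinearMap.id ℝ ℝ).coprod (∑ i, b i • ContinuousLinearMap.proj i)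

@[simp]
lemma linearForm_apply (a : ℝ) (b : ι → ℝ) (z : ℝ) (u : ι → ℝ) :
    linearForm a b (z, u) = a * z + ∑ i, b i * u i := by
  simp [linearForm]

lemma exists_eq_linearForm (L : StrongDual ℝ (ℝ × (ι → ℝ))) : ∃ a b, L = linearForm a b := by
  classical
  refine ⟨L (1, 0), fun i => L (0, fun j => if i = j then 1 else 0), ?_⟩
  ext u
  · simp
  · simpa [mul_comm] using (L ∘L .inr ℝ ℝ (ι → ℝ)).toLinearMap.pi_apply_eq_sum_univ u

variable {Ω : Type*} [MeasurableSpace Ω] {μ : Measure Ω} {Z : Ω → ℝ} {U : Ω → ι → ℝ}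

lemma hasGaussianLaw_prodMk_of_forall_linearForm (hmZ : Measurable Z) (hmU : Measurable U)
    (hGauss : ∀ a b, HasGaussianLaw (fun ω => linearForm a b (Z ω, U ω)) μ) :
    HasGaussianLaw (fun ω => (Z ω, U ω)) μ := by
  refine ⟨isGaussian_of_isGaussian_map fun L => ?_⟩
  obtain ⟨a, b, rfl⟩ := exists_eq_linearForm L
  rw [Measure.map_map (by fun_prop) (by fun_prop)]
  exact (hGauss a b).isGaussian_map

lemma hasGaussianLaw_prodMk_and_integral_eq_zero (hmZ : Measurable Z) (hmU : Measurable U)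
    (hGauss : ∀ (a : ℝ) (b : ι → ℝ), ∃ v : NNReal,
      μ.map (fun ω => a * Z ω + ∑ i, b i * U ω i) = gaussianReal 0 v) :
    HasGaussianLaw (fun ω => (Z ω, U ω)) μ ∧ μ[Z] = 0 ∧ ∀ i, ∫ ω, U ω i ∂μ = 0 := by
  classical
  refine ⟨hasGaussianLaw_prodMk_of_forall_linearForm hmZ hmU fun a b => ⟨?_⟩, ?_, fun i => ?_⟩
  · obtain ⟨v, hv⟩ := hGauss a b
    simp only [linearForm_apply, hv]
    infer_instance
  · obtain ⟨v, hv⟩ := hGauss 1 0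
    exact integral_eq_of_map_eq_gaussianReal (by simpa using hv)
  · obtain ⟨v, hv⟩ := hGauss 0 (Pi.single i 1)
    exact integral_eq_of_map_eq_gaussianReal (by simpa [Pi.single_apply] using hv)

lemma covariance_linearForm_right [IsFiniteMeasure μ] {X : Ω → ℝ} (hX : MemLp X 2 μ)
    (hZ : MemLp Z 2 μ) (hU : ∀ i, MemLp (fun ω => U ω i) 2 μ) (a : ℝ) (b : ι → ℝ) :
    cov[X, fun ω => linearForm a b (Z ω, U ω); μ] =
      a * cov[X, Z; μ] + ∑ i, b i * cov[X, fun ω => U ω i; μ] := by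
  have hbU : ∀ i, MemLp (fun ω => b i * U ω i) 2 μ := fun i => (hU i).const_mul (b i)
  simp only [linearForm_apply]
  calc cov[X, fun ω => a * Z ω + ∑ i, b i * U ω i; μ]
      = cov[X, fun ω => a * Z ω; μ] + cov[X, fun ω => ∑ i, b i * U ω i; μ] :=
        covariance_add_right hX (hZ.const_mul a) (memLp_finsetSum _ fun i _ => hbU i)
    _ = a * cov[X, Z; μ] + ∑ i, b i * cov[X, fun ω => U ω i; μ] := by
        simp only [covariance_fun_sum_right hbU hX, covariance_const_mul_right]

lemma covariance_linearForm_linearForm [IsProbabilityMeasure μ] (hZ : MemLp Z 2 μ)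
    (hU : ∀ i, MemLp (fun ω => U ω i) 2 μ) (hZmean : μ[Z] = 0) (hUmean : ∀ i, ∫ ω, U ω i ∂μ = 0)
    {vZ : ℝ} {ξ : ι → ℝ} {S : Matrix ι ι ℝ} (hvarZ : ∫ ω, Z ω * Z ω ∂μ = vZ)
    (hvarU : ∀ i j, ∫ ω, U ω i * U ω j ∂μ = S i j) (hcov : ∀ i, ∫ ω, Z ω * U ω i ∂μ = ξ i)
    (a c : ℝ) (b d : ι → ℝ) :
    cov[fun ω => linearForm a b (Z ω, U ω), fun ω => linearForm c d (Z ω, U ω); μ] =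
      a * (c * vZ + ∑ i, ξ i * d i) + ∑ i, b i * (c * ξ i + ∑ j, S i j * d j) := by
  have hform : MemLp (fun ω => linearForm c d (Z ω, U ω)) 2 μ := by
    simp only [linearForm_apply]
    exact (hZ.const_mul c).add (memLp_finsetSum _ fun i _ => (hU i).const_mul (d i))
  have hZZ : cov[Z, Z; μ] = vZ := (covariance_eq_integral_mul hZ hZ hZmean).trans hvarZ
  have hZU (i : ι) : cov[Z, fun ω => U ω i; μ] = ξ i :=
    (covariance_eq_integral_mul hZ (hU i) hZmean).trans (hcov i)
  have hUU (i j : ι) : cov[fun ω => U ω i, fun ω => U ω j; μ] = S i j :=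
    (covariance_eq_integral_mul (hU i) (hU j) (hUmean i)).trans (hvarU i j)
  rw [covariance_comm, covariance_linearForm_right hform hZ hU]
  simp only [covariance_comm (fun ω => linearForm c d (Z ω, U ω)),
    covariance_linearForm_right hZ hZ hU, covariance_linearForm_right (hU _) hZ hU,
    covariance_comm _ Z, hZZ, hZU, hUU, mul_comm (d _)]

lemma condExp_linearForm_eq_div_mul_condExp (hmZ : Measurable Z) (hmU : Measurable U)
    {ε : Ω → ℝ} (hmε : Measurable ε) (hZU : HasGaussianLaw (fun ω => (Z ω, U ω)) μ)
    (hZmean : μ[Z] = 0) (hUmean : ∀ i, ∫ ω, U ω i ∂μ = 0)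
    {vZ : ℝ} {ξ : ι → ℝ} {S : Matrix ι ι ℝ} (hvarZ : ∫ ω, Z ω * Z ω ∂μ = vZ)
    (hvarU : ∀ i j, ∫ ω, U ω i * U ω j ∂μ = S i j) (hcov : ∀ i, ∫ ω, Z ω * U ω i ∂μ = ξ i)
    (hindep : IndepFun (fun ω => (Z ω, U ω)) ε μ) {γ : ℝ} {lam : ι → ℝ} (s : ι → ℝ)
    (hne : γ * vZ + ∑ i, ξ i * lam i ≠ 0) :
    μ[fun ω => linearForm 0 s (Z ω, U ω) |
        MeasurableSpace.comap (fun ω => linearForm γ lam (Z ω, U ω) + ε ω) inferInstance] =ᵐ[μ]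
      fun ω => (∑ i, s i * (γ * ξ i + ∑ j, S i j * lam j)) / (γ * vZ + ∑ i, ξ i * lam i) *
        (μ[Z | MeasurableSpace.comap
          (fun ω => linearForm γ lam (Z ω, U ω) + ε ω) inferInstance]) ω := by
  have : IsProbabilityMeasure μ := hZU.isProbabilityMeasure
  have hU (i : ι) : HasGaussianLaw (fun ω => U ω i) μ := hZU.snd.map_fun (.proj i)
  have hZ_form : (fun ω => linearForm 1 (0 : ι → ℝ) (Z ω, U ω)) = Z := by simp
  have hsU_mean : ∫ ω, linearForm 0 s (Z ω, U ω) ∂μ = 0 := by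
    simp [integral_finsetSum _ fun i _ => (hU i).integrable.const_mul (s i), integral_const_mul,
      hUmean]
  have hcov_form := covariance_linearForm_linearForm hZU.fst.memLp_two (fun i => (hU i).memLp_two)
    hZmean hUmean hvarZ hvarU hcov
  filter_upwards [covariance_mul_condExp_add_noise_sub_integral hZU (hmZ.prodMk hmU) hmε hindep
    (linearForm 1 0) (linearForm 0 s) (linearForm γ lam)] with ω hω
  rw [hcov_form, hcov_form, hsU_mean, hZ_form, hZmean] at hω
  simp only [one_mul, zero_mul, Pi.zero_apply, Finset.sum_const_zero, add_zero, zero_add,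
    sub_zero] at hω
  rw [div_mul_eq_mul_div, eq_div_iff hne, mul_comm, hω]

end LinearForm

theorem stmt7_general {Ω : Type*} [MeasurableSpace Ω] {μ : Measure Ω} {ι : Type*} [Fintype ι]
    {Z : Ω → ℝ} {U : Ω → ι → ℝ} {εA εY : Ω → ℝ}
    (hmZ : Measurable Z) (hmU : Measurable U) (hmεA : Measurable εA)
    (hεAint : Integrable εA μ) (hεYint : Integrable εY μ)
    (hZU : HasGaussianLaw (fun ω => (Z ω, U ω)) μ)
    (hZmean : μ[Z] = 0) (hUmean : ∀ i, ∫ ω, U ω i ∂μ = 0)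
    {vZ : ℝ} {ξ : ι → ℝ} {S : Matrix ι ι ℝ}
    (hvarZ : ∫ ω, Z ω * Z ω ∂μ = vZ)
    (hvarU : ∀ i j, ∫ ω, U ω i * U ω j ∂μ = S i j)
    (hcov : ∀ i, ∫ ω, Z ω * U ω i ∂μ = ξ i)
    (hindepA : IndepFun εA (fun ω => (Z ω, U ω)) μ)
    {α β γ : ℝ} {lam s : ι → ℝ}
    (hne : γ * vZ + ∑ i, ξ i * lam i ≠ 0)
    {A Y : Ω → ℝ}
    (hA : ∀ ω, A ω = γ * Z ω + (∑ i, lam i * U ω i) + εA ω)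
    (hY : ∀ ω, Y ω = α * A ω + β * Z ω + (∑ i, s i * U ω i) + εY ω)
    (hεY : μ[εY | MeasurableSpace.comap A inferInstance] =ᵐ[μ] 0) :
    μ[Y | MeasurableSpace.comap A inferInstance]
      =ᵐ[μ] fun ω => α * A ω +
        (β + (∑ i, s i * (γ * ξ i + ∑ j, S i j * lam j)) / (γ * vZ + ∑ i, ξ i * lam i)) *
          ((μ[Z | MeasurableSpace.comap A inferInstance]) ω) := by
  have : IsProbabilityMeasure μ := hZU.isProbabilityMeasure
  have hA_form : A = fun ω => linearForm γ lam (Z ω, U ω) + εA ω := by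
    simp only [linearForm_apply, funext hA]
  have hY_form : Y = α • A + β • Z + (fun ω => linearForm 0 s (Z ω, U ω)) + εY := by
    ext ω
    simp [hY]
  have hmA : Measurable A := hA_form ▸ by fun_prop
  have hAint : Integrable A μ := hA_form ▸ (hZU.map_fun (linearForm γ lam)).integrable.add hεAint
  have hsU := condExp_linearForm_eq_div_mul_condExp hmZ hmU hmεA hZU hZmean hUmean hvarZ hvarU
    hcov hindepA.symm s hne
  rw [← hA_form] at hsU
  have hYcond := condExp_smul_add_smul_add_of_condExp_eq_zero hmA.comap_le
    (comap_measurable A).stronglyMeasurable hAint hZU.fst.integrable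
    (hZU.map_fun (linearForm 0 s)).integrable hεYint hεY α β
  filter_upwards [hsU, hYcond] with ω hsUω hYω
  rw [hY_form, hYω, hsUω]
  ring

/-- Under A = γZ + λᵀU + ε_A, Y = αA + βZ + sᵀU + ε_Y with (Z,U)
centered Gaussian, ε_A ⊥ (Z,U) non-Gaussian with nonzero variance, E(ε_Y | A)=0,
and Cov(Z,A) = γ + ξᵀλ ≠ 0, one has E(Y | A) = αA + h·E(Z | A) a.s. where
h = β + sᵀ(γξ + λ)/(γ + ξᵀλ). -/
theorem stmt7 {Ω : Type*} [MeasurableSpace Ω] (μ : Measure Ω) [IsProbabilityMeasure μ]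
    {t : ℕ} (Z : Ω → ℝ) (U : Ω → Fin t → ℝ) (εA εY : Ω → ℝ)
    (hmZ : Measurable Z) (hmU : Measurable U) (hmεA : Measurable εA)
    (hmεY : Measurable εY) (hεYint : Integrable εY μ)
    (hGauss : ∀ (a : ℝ) (b : Fin t → ℝ), ∃ v : NNReal,
      Measure.map (fun ω => a * Z ω + ∑ i, b i * U ω i) μ = gaussianReal 0 v)
    (ξ : Fin t → ℝ)
    (hvarZ : ∫ ω, Z ω * Z ω ∂μ = 1)
    (hvarU : ∀ i j, ∫ ω, U ω i * U ω j ∂μ = if i = j then 1 else 0)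
    (hcov : ∀ i, ∫ ω, Z ω * U ω i ∂μ = ξ i)
    (hindepA : IndepFun εA (fun ω => (Z ω, U ω)) μ)
    (hεvar : variance εA μ ≠ 0)
    (hεnonGauss : ¬ ∃ (m : ℝ) (v : NNReal), Measure.map εA μ = gaussianReal m v)
    (α β γ : ℝ) (lam s : Fin t → ℝ)
    (hne : γ + ∑ i, ξ i * lam i ≠ 0)
    (A Y : Ω → ℝ)
    (hA : ∀ ω, A ω = γ * Z ω + (∑ i, lam i * U ω i) + εA ω)
    (hY : ∀ ω, Y ω = α * A ω + β * Z ω + (∑ i, s i * U ω i) + εY ω)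
    (hεY : μ[εY | MeasurableSpace.comap A inferInstance] =ᵐ[μ] 0)
    (h : ℝ)
    (hh : h = β + (∑ i, s i * (γ * ξ i + lam i)) / (γ + ∑ i, ξ i * lam i)) :
    μ[Y | MeasurableSpace.comap A inferInstance]
      =ᵐ[μ] fun ω => α * A ω +
        h * ((μ[Z | MeasurableSpace.comap A inferInstance]) ω) := by
  obtain ⟨hZU, hZmean, hUmean⟩ := hasGaussianLaw_prodMk_and_integral_eq_zero hmZ hmU hGauss
  have hεAint : Integrable εA μ :=
    (memLp_two_of_variance_ne_zero hmεA.aestronglyMeasurable hεvar).integrable one_le_two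
  simpa [hh, Matrix.one_apply] using stmt7_general (S := 1) hmZ hmU hmεA hεAint hεYint hZU hZmean
    hUmean hvarZ hvarU hcov hindepA (by simpa using hne) hA hY hεY
end
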